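/- Let 0<u_-<u_+<1 with u_-+u_+=1. The functional G is lower semicontinuous on X, and the set of its minimizers is exactly the one-parameter family {(τ_z ū, τ_z φ̄) : z ∈ ℝ}, where ū(x) = 1/2 + (u_+−1/2)tanh((u_+−1/2)x) and φ̄ = s'(ū). -/

import Mathlib

/-!
Write `a = u₊(1-u₊)`, `b = φ₊` (so `φ₋ = -b` and `u₋ = 1-u₊`), and let `σ` be the logistic
function, the inverse of `s'`.  The proof completes the square in the entropic sense.  With
`kl(p,q)` the relative entropy of Bernoulli laws, `qf(φ) = 1 - a/(σ(φ)(1-σ(φ)))` and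
`ψ = log qf - log(1-qf)`,

  `g(u,φ,p) - g(u₊,φ₊,0) = kl(u, σ(φ)) + kl(p, qf(φ)) + p ψ(φ)`   (`Hup.gg_eq`).

The last term, at `p = φ'`, is a null Lagrangian: by the change of variables `y = φ(x)` its
integral is the constant `Kmin = ∫_{-b}^{b} ψ` for every `φ` in the class `C`
(`MemC.change_of_variables`).  The two entropies are nonnegative, and their integral `excess` is
finite precisely on the domain of `G`: there `kl(u,σ(φ)) ≤ (u-σ(φ))²/a`, and conversely a weak
Pinsker inequality and `q_le_kl` recover the integrability conditions.  Hence
`G = Kmin + excess` on all of `X` (`GE_eq`).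

*Lower semicontinuity.*  By duality `kl(p,q) = sup_l (p l - log(1-q+q e^l))`, a supremum of
expressions affine in `p` and continuous in `q`.  So `∫ kl(p,q)` is lower semicontinuous when `p`
converges weakly-* and `q` pointwise (`lsc_kl`).  Uniform convergence of `φ` gives pointwise
convergence of `σ(φ)` and `qf(φ)` and weak-* convergence of the slopes `φ'` (`ML.tendsto_deriv`).

*Minimizers.*  `excess = 0` exactly when `u = σ(φ)` and `φ' = qf(φ)` almost everywhere.  The
second equation then holds classically, and since `qf` is Lipschitz on `[-b,b]` its solutions that
vanish at a given point are unique (`eq_tau_phibar`).  The pair `(ū, φ̄)` solves both equations,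
because `ū' = ū(1-ū) - a` (`hasDerivAt_ubar`).
-/


open MeasureTheory Real Filter Topology Set
open scoped Classical

noncomputable section

/-- Bernoulli entropy `s(p) = p log p + (1-p) log (1-p)` (with `0 log 0 = 0`). -/
def S (p : ℝ) : ℝ := p * Real.log p + (1 - p) * Real.log (1 - p)

/-- The integrand `g(u,φ,p) = s(u) + s(p) + (1-u)φ - log(1+e^φ)`. -/
def gg (u φ p : ℝ) : ℝ := S u + S p + (1 - u) * φ - Real.log (1 + Real.exp φ)

/-- The chemical potential `s'(v) = log (v/(1-v))`. -/
def phiOf (v : ℝ) : ℝ := Real.log (v / (1 - v))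

/-- The step function `θ_{a₋,a₊}`. -/
def theta (am ap x : ℝ) : ℝ := if x < 0 then am else ap

/-- Translation by `z`: `(τ_z f)(x) = f(x-z)`. -/
def tau (z : ℝ) (f : ℝ → ℝ) : ℝ → ℝ := fun x => f (x - z)

/-- Membership in `L^∞(ℝ;[0,1])`. -/
def MemU (u : ℝ → ℝ) : Prop := Measurable u ∧ ∀ x, u x ∈ Icc (0:ℝ) 1

/-- Membership in `L^∞(ℝ₊;[0,1])`. -/
def MemUplus (u : ℝ → ℝ) : Prop := Measurable u ∧ ∀ x, 0 ≤ x → u x ∈ Icc (0:ℝ) 1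

/-- The class `C`: absolutely continuous with `0 ≤ φ' ≤ 1` a.e. (equivalently nondecreasing
and 1-Lipschitz) with limits `pm` at `-∞` and `pp` at `+∞`. -/
def MemC (pm pp : ℝ) (φ : ℝ → ℝ) : Prop :=
  (∀ x y : ℝ, x ≤ y → φ x ≤ φ y ∧ φ y - φ x ≤ y - x) ∧
  Tendsto φ atBot (𝓝 pm) ∧ Tendsto φ atTop (𝓝 pp)

/-- The class `C⁺` on the half line. -/
def MemCplus (pm pp : ℝ) (φ : ℝ → ℝ) : Prop :=
  (∀ x y : ℝ, 0 ≤ x → x ≤ y → φ x ≤ φ y ∧ φ y - φ x ≤ y - x) ∧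
  φ 0 = pm ∧ Tendsto φ atTop (𝓝 pp)

/-- Membership in `X = L^∞(ℝ;[0,1]) × C`. -/
def MemX (um up : ℝ) (u φ : ℝ → ℝ) : Prop := MemU u ∧ MemC (phiOf um) (phiOf up) φ

/-- Membership in `X⁺ = L^∞(ℝ₊;[0,1]) × C⁺`. -/
def MemXplus (um up : ℝ) (u φ : ℝ → ℝ) : Prop :=
  MemUplus u ∧ MemCplus (phiOf um) (phiOf up) φ

/-- The finite volume functional `G_ℓ` on the symmetric interval `(-ℓ,ℓ)`. -/
def Gl (um up l : ℝ) (u φ : ℝ → ℝ) : EReal :=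
  if (∀ x ≤ -l, u x = um ∧ φ x = phiOf um) ∧ (∀ x, l ≤ x → u x = up ∧ φ x = phiOf up) then
    (↑(∫ x in Ioo (-l) l, (gg (u x) (φ x) (deriv φ x) - gg up (phiOf up) 0)) : EReal)
  else ⊤

/-- The finite volume functional `G_ℓ⁺` on `(0,ℓ)`. -/
def Glplus (um up l : ℝ) (u φ : ℝ → ℝ) : EReal :=
  if (∀ x, l ≤ x → u x = up ∧ φ x = phiOf up) then
    (↑(∫ x in Ioo (0:ℝ) l, (gg (u x) (φ x) (deriv φ x) - gg up (phiOf up) 0)) : EReal)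
  else ⊤

/-- The infinite volume functional `G` on the whole line, `+∞` off its domain `D`. -/
def GE (um up : ℝ) (u φ : ℝ → ℝ) : EReal :=
  if Integrable (fun x => (u x - theta um up x)^2) volume ∧
      Integrable (fun x => φ x - theta (phiOf um) (phiOf up) x) volume then
    (↑(∫ x, (gg (u x) (φ x) (deriv φ x) - gg up (phiOf up) 0)) : EReal)
  else ⊤

/-- The infinite volume functional `G⁺` on the half line, `+∞` off its domain `D⁺`. -/
def GEplus (um up : ℝ) (u φ : ℝ → ℝ) : EReal :=
  if IntegrableOn (fun x => (u x - up)^2) (Ioi 0) volume ∧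
      IntegrableOn (fun x => φ x - phiOf up) (Ioi 0) volume then
    (↑(∫ x in Ioi (0:ℝ), (gg (u x) (φ x) (deriv φ x) - gg up (phiOf up) 0)) : EReal)
  else ⊤

/-- Convergence of sequences in `X`: weak* in `L^∞(ℝ;[0,1])` and uniform for `φ`. -/
def ConvX (un φn : ℕ → ℝ → ℝ) (u φ : ℝ → ℝ) : Prop :=
  (∀ f : ℝ → ℝ, Integrable f volume →
    Tendsto (fun n => ∫ x, un n x * f x) atTop (𝓝 (∫ x, u x * f x))) ∧
  TendstoUniformly φn φ atTop

/-- Convergence of families indexed by `ℓ → ∞` in `X`. -/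
def ConvXFam (U Φ : ℝ → ℝ → ℝ) (u φ : ℝ → ℝ) : Prop :=
  (∀ f : ℝ → ℝ, Integrable f volume →
    Tendsto (fun l => ∫ x, U l x * f x) atTop (𝓝 (∫ x, u x * f x))) ∧
  TendstoUniformly Φ φ atTop

/-- Convergence of sequences in `X⁺`. -/
def ConvXplus (un φn : ℕ → ℝ → ℝ) (u φ : ℝ → ℝ) : Prop :=
  (∀ f : ℝ → ℝ, IntegrableOn f (Ioi 0) volume →
    Tendsto (fun n => ∫ x in Ioi (0:ℝ), un n x * f x) atTop
      (𝓝 (∫ x in Ioi (0:ℝ), u x * f x))) ∧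
  TendstoUniformlyOn φn φ atTop (Ici 0)

/-- Convergence of families indexed by `ℓ → ∞` in `X⁺`. -/
def ConvXplusFam (U Φ : ℝ → ℝ → ℝ) (u φ : ℝ → ℝ) : Prop :=
  (∀ f : ℝ → ℝ, IntegrableOn f (Ioi 0) volume →
    Tendsto (fun l => ∫ x in Ioi (0:ℝ), U l x * f x) atTop
      (𝓝 (∫ x in Ioi (0:ℝ), u x * f x))) ∧
  TendstoUniformlyOn Φ φ atTop (Ici 0)

/-- The standing wave `ū(x) = 1/2 + (u₊ - 1/2) tanh((u₊ - 1/2) x)`. -/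
def ubarStanding (up : ℝ) (x : ℝ) : ℝ :=
  1/2 + (up - 1/2) * Real.tanh ((up - 1/2) * x)

/-! ### Relative entropy of Bernoulli laws -/

/-- The relative entropy of the Bernoulli law of parameter `p` with respect to that of
parameter `q`.  For `q = 0` it is the right value only when `p = 0`. -/
def kl (p q : ℝ) : ℝ := S p - p * Real.log q - (1 - p) * Real.log (1 - q)

/-- Admissible pairs for `kl`: `p ∈ [0,1]`, `q ∈ [0,1)`, and `p = 0` wherever `q = 0`. -/
def Adm (p q : ℝ) : Prop := 0 ≤ p ∧ p ≤ 1 ∧ 0 ≤ q ∧ q < 1 ∧ (q = 0 → p = 0)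

/-- The expression whose supremum over `l` is `kl p q` (Donsker–Varadhan duality). -/
def dv (p q l : ℝ) : ℝ := p * l - Real.log (1 - q + q * Real.exp l)

lemma gibbs {p r : ℝ} (hp : 0 ≤ p) (hr : 0 < r) : p - r ≤ p * (Real.log p - Real.log r) := by
  rcases hp.eq_or_lt with rfl | hp
  · simp [hr.le]
  · have h := Real.log_le_sub_one_of_pos (div_pos hr hp)
    rw [Real.log_div hr.ne' hp.ne'] at h
    have h2 := mul_le_mul_of_nonneg_left h hp.le
    have h3 : p * (r / p - 1) = r - p := by field_simp
    nlinarith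

lemma dv_arg_pos {q : ℝ} (h0 : 0 ≤ q) (h1 : q < 1) (l : ℝ) : 0 < 1 - q + q * Real.exp l := by
  have := Real.exp_pos l
  nlinarith [mul_nonneg h0 this.le]

lemma dv_le_kl {p q : ℝ} (h : Adm p q) (l : ℝ) : dv p q l ≤ kl p q := by
  obtain ⟨hp0, hp1, hq0, hq1, hpq⟩ := h
  rcases hq0.eq_or_lt with rfl | hq
  · simp [hpq rfl, dv, kl, S]
  · have hm := dv_arg_pos hq0 hq1 l
    set m := 1 - q + q * Real.exp l with hmdef
    have e := Real.exp_pos l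
    -- the Bernoulli law of parameter `q e^l / m` is the exponential tilt of that of parameter `q`
    have g1 := gibbs hp0 (div_pos (mul_pos hq e) hm)
    have g2 := gibbs (sub_nonneg.2 hp1) (div_pos (sub_pos.2 hq1) hm)
    rw [Real.log_div (by positivity) hm.ne', Real.log_mul hq.ne' e.ne', Real.log_exp] at g1
    rw [Real.log_div (sub_pos.2 hq1).ne' hm.ne'] at g2
    have h3 : q * Real.exp l / m + (1 - q) / m = 1 := by
      rw [← add_div, div_eq_one_iff_eq hm.ne']; ring
    unfold dv kl S
    rw [← hmdef]
    linarith

lemma kl_nonneg {p q : ℝ} (h : Adm p q) : 0 ≤ kl p q := by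
  simpa [dv] using dv_le_kl h 0

/-- A weak form of Pinsker's inequality. -/
lemma sq_le_kl {p q : ℝ} (h : Adm p q) : (p - q) ^ 2 / 4 ≤ kl p q := by
  refine le_trans ?_ (dv_le_kl h ((p - q) / 2))
  obtain ⟨hp0, hp1, hq0, hq1, hpq⟩ := h
  have hl : |(p - q) / 2| ≤ 1 := by rw [abs_le]; constructor <;> linarith
  have he := (abs_le.1 (Real.abs_exp_sub_one_sub_id_le hl)).2
  have hlog := Real.log_le_sub_one_of_pos (dv_arg_pos hq0 hq1 ((p - q) / 2))
  have := mul_le_mul_of_nonneg_left he hq0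
  unfold dv
  nlinarith [mul_nonneg (sub_nonneg.2 hq1.le) (sq_nonneg ((p - q) / 2))]

lemma eq_of_kl_eq_zero {p q : ℝ} (h : Adm p q) (h0 : kl p q = 0) : p = q := by
  have := sq_le_kl h
  have : (p - q) ^ 2 = 0 := le_antisymm (by linarith) (sq_nonneg _)
  exact sub_eq_zero.1 (pow_eq_zero_iff (two_ne_zero) |>.1 this)

lemma kl_self (p : ℝ) : kl p p = 0 := by unfold kl S; ring

/-- The chi-square bound for the relative entropy. -/
lemma kl_le_sq {p q : ℝ} (hp0 : 0 ≤ p) (hp1 : p ≤ 1) (hq0 : 0 < q) (hq1 : q < 1) :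
    kl p q ≤ (p - q) ^ 2 / (q * (1 - q)) := by
  have key : ∀ {p q : ℝ}, 0 ≤ p → 0 < q → p * Real.log p - p * Real.log q ≤ p * (p / q - 1) := by
    intro p q hp hq
    rcases hp.eq_or_lt with rfl | hp
    · simp
    · have := Real.log_le_sub_one_of_pos (div_pos hp hq)
      rw [Real.log_div hp.ne' hq.ne'] at this
      nlinarith
  have k1 := key hp0 hq0
  have k2 := key (sub_nonneg.2 hp1) (sub_pos.2 hq1)
  have : p * (p / q - 1) + (1 - p) * ((1 - p) / (1 - q) - 1) = (p - q) ^ 2 / (q * (1 - q)) := by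
    have := (sub_pos.2 hq1).ne'
    field_simp
    ring
  unfold kl S
  linarith

/-- If the relative entropy is small then `q` is controlled by `p`, linearly. -/
lemma q_le_kl {p q : ℝ} (h : Adm p q) : q ≤ 2 * (kl p q + p) := by
  have h1 := dv_le_kl h (-1)
  obtain ⟨hp0, hp1, hq0, hq1, hpq⟩ := h
  have hlog := Real.log_le_sub_one_of_pos (dv_arg_pos hq0 hq1 (-1))
  have he : Real.exp (-1) ≤ 1 / 2 := by
    rw [Real.exp_neg, one_div]
    exact inv_anti₀ two_pos (by linarith [Real.add_one_le_exp (1 : ℝ)])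
  have := mul_le_mul_of_nonneg_left he hq0
  unfold dv at h1
  linarith

lemma S_nonpos {p : ℝ} (h0 : 0 ≤ p) (h1 : p ≤ 1) : S p ≤ 0 := by
  have := Real.mul_log_nonpos h0 h1
  have := Real.mul_log_nonpos (sub_nonneg.2 h1) (by linarith)
  unfold S; linarith

/-- Bounded multipliers that are asymptotically optimal in `dv_le_kl`: the optimal multiplier
`log (p/(1-p)) - log (q/(1-q))`, truncated at height `k`. -/
def mult (k : ℕ) (p q : ℝ) : ℝ :=
  if p = 0 then -(k : ℝ) else if p = 1 then k else
    max (-(k : ℝ)) (min k (Real.log p - Real.log (1 - p) - (Real.log q - Real.log (1 - q))))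

lemma abs_mult_le (k : ℕ) (p q : ℝ) : |mult k p q| ≤ k := by
  have hk : (0 : ℝ) ≤ k := Nat.cast_nonneg k
  unfold mult
  split_ifs
  · simp
  · simp
  · rw [abs_le]
    exact ⟨le_max_left _ _, max_le (by linarith) (min_le_left _ _)⟩

lemma measurable_mult (k : ℕ) {p q : ℝ → ℝ} (hp : Measurable p) (hq : Measurable q) :
    Measurable (fun x => mult k (p x) (q x)) := by
  unfold mult
  refine Measurable.ite (hp (measurableSet_singleton 0)) measurable_const ?_
  refine Measurable.ite (hp (measurableSet_singleton 1)) measurable_const ?_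
  fun_prop

lemma tendsto_dv_mult {p q : ℝ} (h : Adm p q) :
    Tendsto (fun k : ℕ => dv p q (mult k p q)) atTop (𝓝 (kl p q)) := by
  obtain ⟨hp0, hp1, hq0, hq1, hpq⟩ := h
  have hexp : Tendsto (fun k : ℕ => Real.exp (-(k : ℝ))) atTop (𝓝 0) :=
    Real.tendsto_exp_neg_atTop_nhds_zero.comp tendsto_natCast_atTop_atTop
  rcases hq0.eq_or_lt with rfl | hq
  · simp [hpq rfl, dv, kl, S]
  have hq1' := sub_pos.2 hq1
  rcases hp0.eq_or_lt with rfl | hp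
  · simp only [dv, mult, kl, S]
    have : Tendsto (fun k : ℕ => 1 - q + q * Real.exp (-(k : ℝ))) atTop (𝓝 (1 - q + q * 0)) :=
      (hexp.const_mul q).const_add _
    have := (this.log (by simpa using hq1'.ne')).neg
    simpa using this
  rcases hp1.eq_or_lt with rfl | hp1
  · have : Tendsto (fun k : ℕ => (1 - q) * Real.exp (-(k : ℝ)) + q) atTop
        (𝓝 ((1 - q) * 0 + q)) := (hexp.const_mul _).add_const _
    have := (this.log (by simpa using hq.ne')).neg
    have e : kl 1 q = - Real.log ((1 - q) * 0 + q) := by simp [kl, S]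
    rw [e]
    refine this.congr fun k => ?_
    simp only [dv, mult, one_ne_zero, if_false, if_true]
    have : 1 - q + q * Real.exp k = ((1 - q) * Real.exp (-(k : ℝ)) + q) * Real.exp k := by
      rw [add_mul, mul_assoc, ← Real.exp_add]; simp
    rw [this, Real.log_mul (by positivity) (Real.exp_pos _).ne', Real.log_exp]
    ring
  · have hp1' := sub_pos.2 hp1
    set l := Real.log p - Real.log (1 - p) - (Real.log q - Real.log (1 - q)) with hl
    refine tendsto_const_nhds.congr' ?_
    obtain ⟨N, hN⟩ := exists_nat_ge |l|
    filter_upwards [eventually_ge_atTop N] with k hk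
    have hk' : |l| ≤ k := hN.trans (by exact_mod_cast hk)
    have hm : mult k p q = l := by
      unfold mult
      rw [if_neg hp.ne', if_neg hp1.ne, ← hl, min_eq_right (abs_le.1 hk').2,
        max_eq_right (abs_le.1 hk').1]
    have he : Real.exp l = p / (1 - p) / (q / (1 - q)) := by
      rw [hl, Real.exp_sub, Real.exp_sub, Real.exp_sub, Real.exp_log hp, Real.exp_log hp1',
        Real.exp_log hq, Real.exp_log hq1']
    have : 1 - q + q * Real.exp l = (1 - q) / (1 - p) := by
      rw [he]; field_simp; ring
    rw [hm, dv, this, Real.log_div hq1'.ne' hp1'.ne', kl, S, hl]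
    ring

/-! ### Weak lower semicontinuity of the relative entropy -/

lemma abs_log_arg_le {q : ℝ} (h0 : 0 ≤ q) (h1 : q < 1) (l : ℝ) :
    |Real.log (1 - q + q * Real.exp l)| ≤ |l| := by
  have hm := dv_arg_pos h0 h1 l
  have e1 : Real.exp l ≤ Real.exp |l| := Real.exp_le_exp.2 (le_abs_self l)
  have e2 : 1 ≤ Real.exp |l| := Real.one_le_exp (abs_nonneg l)
  have e3 : Real.exp (-|l|) ≤ Real.exp l := Real.exp_le_exp.2 (neg_abs_le l)
  have e4 : Real.exp (-|l|) ≤ 1 := Real.exp_le_one_iff.2 (by simp)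
  rw [abs_le]
  constructor
  · rw [Real.le_log_iff_exp_le hm]
    nlinarith [mul_le_mul_of_nonneg_left e3 h0, mul_le_mul_of_nonneg_left e4 (sub_nonneg.2 h1.le)]
  · rw [Real.log_le_iff_le_exp hm]
    nlinarith [mul_le_mul_of_nonneg_left e1 h0, mul_le_mul_of_nonneg_left e2 (sub_nonneg.2 h1.le)]

/-- Fatou-type lower semicontinuity: if `pn → p` weakly-* in `L^∞` and `qn → q` pointwise, then
`∫ kl(p,q) ≤ liminf ∫ kl(pn,qn)`.  By duality `kl` is a supremum of expressions `dv p q l`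
that are affine in `p`; the integral of each of them, for bounded compactly supported `l`,
passes to the limit. -/
lemma lsc_kl {p q : ℝ → ℝ} {pn qn : ℕ → ℝ → ℝ} (hp : Measurable p) (hq : Measurable q)
    (hpn : ∀ n, Measurable (pn n)) (hqn : ∀ n, Measurable (qn n))
    (h : ∀ x, Adm (p x) (q x)) (hn : ∀ n x, Adm (pn n x) (qn n x))
    (hw : ∀ f : ℝ → ℝ, Integrable f volume →
      Tendsto (fun n => ∫ x, pn n x * f x) atTop (𝓝 (∫ x, p x * f x)))
    (hc : ∀ x, Tendsto (fun n => qn n x) atTop (𝓝 (q x))) :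
    ∫⁻ x, ENNReal.ofReal (kl (p x) (q x)) ≤
      liminf (fun n => ∫⁻ x, ENNReal.ofReal (kl (pn n x) (qn n x))) atTop := by
  -- `l` is a truncation of the optimal multiplier, set to `0` where it gives a negative value
  let l : ℕ → ℝ → ℝ := fun k x =>
    if x ∈ Icc (-(k : ℝ)) k ∧ 0 ≤ dv (p x) (q x) (mult k (p x) (q x)) then
      mult k (p x) (q x) else 0
  have hdvm : ∀ {p q l : ℝ → ℝ}, Measurable p → Measurable q → Measurable l →
      Measurable (fun x => dv (p x) (q x) (l x)) := by
    intro p q l hp hq hl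
    unfold dv
    fun_prop
  have hlm : ∀ k, Measurable (l k) := by
    intro k
    refine Measurable.ite ?_ (measurable_mult k hp hq) measurable_const
    exact measurableSet_Icc.inter
      (measurableSet_le measurable_const (hdvm hp hq (measurable_mult k hp hq)))
  have hlint : ∀ k, Integrable (l k) := by
    intro k
    have : Integrable ((Icc (-(k : ℝ)) k).indicator (fun _ => (k : ℝ))) :=
      (integrable_indicator_iff measurableSet_Icc).2 (integrableOn_const (by simp) (by simp))
    refine this.mono' (hlm k).aestronglyMeasurable (ae_of_all _ fun x => ?_)
    simp only [l]
    split_ifs with hx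
    · rw [indicator_of_mem hx.1]; exact abs_mult_le _ _ _
    · simp only [norm_zero]
      exact indicator_nonneg (fun _ _ => Nat.cast_nonneg k) x
  have hnonneg : ∀ k x, 0 ≤ dv (p x) (q x) (l k x) := by
    intro k x
    simp only [l]
    split_ifs with hx
    · exact hx.2
    · simp [dv]
  have hpair : ∀ {p q : ℝ → ℝ}, Measurable p → Measurable q → (∀ x, Adm (p x) (q x)) → ∀ k,
      Integrable (fun x => p x * l k x) ∧
      Integrable (fun x => Real.log (1 - q x + q x * Real.exp (l k x))) := by
    intro p q hp hq h k
    constructor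
    · refine (hlint k).norm.mono' (hp.mul (hlm k)).aestronglyMeasurable (ae_of_all _ fun x => ?_)
      rw [norm_mul, Real.norm_eq_abs, abs_of_nonneg (h x).1]
      exact mul_le_of_le_one_left (norm_nonneg _) (h x).2.1
    · have hm : Measurable (fun x => Real.log (1 - q x + q x * Real.exp (l k x))) :=
        Real.measurable_log.comp ((hq.const_sub 1).add (hq.mul (Real.measurable_exp.comp (hlm k))))
      refine (hlint k).norm.mono' hm.aestronglyMeasurable (ae_of_all _ fun x => ?_)
      exact abs_log_arg_le (h x).2.2.1 (h x).2.2.2.1 _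
  have hdiff : ∀ {p q : ℝ → ℝ}, Measurable p → Measurable q → (∀ x, Adm (p x) (q x)) → ∀ k,
      Integrable (fun x => dv (p x) (q x) (l k x)) :=
    fun hp hq h k => (hpair hp hq h k).1.sub (hpair hp hq h k).2
  have hlim : ∀ k, Tendsto (fun n => ∫ x, dv (pn n x) (qn n x) (l k x)) atTop
      (𝓝 (∫ x, dv (p x) (q x) (l k x))) := by
    intro k
    have e : ∀ {p q : ℝ → ℝ}, Measurable p → Measurable q → (∀ x, Adm (p x) (q x)) →
        ∫ x, dv (p x) (q x) (l k x) =
          (∫ x, p x * l k x) - ∫ x, Real.log (1 - q x + q x * Real.exp (l k x)) := by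
      intro p q hp hq h
      exact integral_sub (hpair hp hq h k).1 (hpair hp hq h k).2
    rw [e hp hq h]
    simp_rw [fun n => e (hpn n) (hqn n) (hn n)]
    refine (hw _ (hlint k)).sub ?_
    refine tendsto_integral_of_dominated_convergence (fun x => ‖l k x‖) (fun n => ?_)
      (hlint k).norm (fun n => ae_of_all _ fun x => ?_) (ae_of_all _ fun x => ?_)
    · exact (hpair (hpn n) (hqn n) (hn n) k).2.aestronglyMeasurable
    · exact abs_log_arg_le (hn n x).2.2.1 (hn n x).2.2.2.1 _
    · refine Tendsto.log ?_ (dv_arg_pos (h x).2.2.1 (h x).2.2.2.1 _).ne'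
      exact ((hc x).const_sub 1).add ((hc x).mul_const _)
  have hk : ∀ k, ∫⁻ x, ENNReal.ofReal (dv (p x) (q x) (l k x)) ≤
      liminf (fun n => ∫⁻ x, ENNReal.ofReal (kl (pn n x) (qn n x))) atTop := by
    intro k
    rw [← ofReal_integral_eq_lintegral_ofReal (hdiff hp hq h k)
      (ae_of_all _ (hnonneg k))]
    have := (ENNReal.continuous_ofReal.tendsto _).comp (hlim k)
    rw [← this.liminf_eq]
    refine liminf_le_liminf (Eventually.of_forall fun n => ?_)
    refine le_trans ?_ (lintegral_mono fun x => ENNReal.ofReal_le_ofReal (dv_le_kl (hn n x) (l k x)))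
    refine ENNReal.ofReal_le_of_le_toReal ?_
    dsimp only
    rw [integral_eq_lintegral_pos_part_sub_lintegral_neg_part
      (hdiff (hpn n) (hqn n) (hn n) k)]
    exact sub_le_self _ ENNReal.toReal_nonneg
  have hptw : ∀ x, Tendsto (fun k => ENNReal.ofReal (dv (p x) (q x) (l k x))) atTop
      (𝓝 (ENNReal.ofReal (kl (p x) (q x)))) := by
    intro x
    refine (ENNReal.continuous_ofReal.tendsto _).comp ?_
    have h1 := (tendsto_dv_mult (h x)).max (tendsto_const_nhds (x := (0 : ℝ)))
    rw [max_eq_left (kl_nonneg (h x))] at h1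
    refine h1.congr' ?_
    obtain ⟨N, hN⟩ := exists_nat_ge |x|
    filter_upwards [eventually_ge_atTop N] with k hk
    have hx : |x| ≤ k := hN.trans (by exact_mod_cast hk)
    simp only [l]
    by_cases hd : 0 ≤ dv (p x) (q x) (mult k (p x) (q x))
    · rw [if_pos ⟨abs_le.1 hx, hd⟩, max_eq_left hd]
    · rw [if_neg (fun hh => hd hh.2), max_eq_right (le_of_not_ge hd)]
      simp [dv]
  calc ∫⁻ x, ENNReal.ofReal (kl (p x) (q x))
      = ∫⁻ x, liminf (fun k => ENNReal.ofReal (dv (p x) (q x) (l k x))) atTop := by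
        simp_rw [fun x => (hptw x).liminf_eq]
    _ ≤ liminf (fun k => ∫⁻ x, ENNReal.ofReal (dv (p x) (q x) (l k x))) atTop :=
        lintegral_liminf_le fun k => (hdvm hp hq (hlm k)).ennreal_ofReal
    _ ≤ liminf (fun _ : ℕ =>
          liminf (fun n => ∫⁻ x, ENNReal.ofReal (kl (pn n x) (qn n x))) atTop) atTop :=
        liminf_le_liminf (Eventually.of_forall hk)
    _ = _ := liminf_const _

/-! ### Nondecreasing 1-Lipschitz profiles -/

/-- Nondecreasing and 1-Lipschitz. -/
def ML (f : ℝ → ℝ) : Prop := ∀ x y : ℝ, x ≤ y → f x ≤ f y ∧ f y - f x ≤ y - x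

namespace ML
variable {f : ℝ → ℝ}

lemma monotone (h : ML f) : Monotone f := fun x y hxy => (h x y hxy).1

lemma lipschitz (h : ML f) : LipschitzWith 1 f := by
  refine LipschitzWith.of_le_add fun x y => ?_
  rw [Real.dist_eq]
  rcases le_total x y with hxy | hxy
  · linarith [(h x y hxy).1, abs_nonneg (x - y)]
  · linarith [(h y x hxy).2, le_abs_self (x - y)]

lemma continuous (h : ML f) : Continuous f := h.lipschitz.continuous

lemma deriv_nonneg (h : ML f) (x : ℝ) : 0 ≤ deriv f x := h.monotone.deriv_nonneg

lemma deriv_le_one (h : ML f) (x : ℝ) : deriv f x ≤ 1 := by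
  simpa using (le_abs_self _).trans (norm_deriv_le_of_lipschitz (x₀ := x) h.lipschitz)

lemma integral_deriv (h : ML f) (a b : ℝ) : ∫ x in a..b, deriv f x = f b - f a :=
  (h.lipschitz.lipschitzOnWith (s := uIcc a b)).absolutelyContinuousOnInterval.integral_deriv_eq_sub

end ML

lemma lineDeriv_one (f : ℝ → ℝ) (x : ℝ) : lineDeriv ℝ f x 1 = deriv f x := by
  simp [lineDeriv, deriv_comp_const_add]

/-- Uniform convergence of nondecreasing 1-Lipschitz functions implies weak-* convergence of
their derivatives in `L^∞`. -/
lemma ML.tendsto_deriv {φ : ℝ → ℝ} {φn : ℕ → ℝ → ℝ} (h : ML φ) (hn : ∀ n, ML (φn n))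
    (hc : TendstoUniformly φn φ atTop) {f : ℝ → ℝ} (hf : Integrable f) :
    Tendsto (fun n => ∫ x, deriv (φn n) x * f x) atTop (𝓝 (∫ x, deriv φ x * f x)) := by
  have hmul : ∀ {ψ : ℝ → ℝ}, ML ψ → ∀ {f : ℝ → ℝ}, Integrable f →
      Integrable (fun x => deriv ψ x * f x) := by
    intro ψ hψ f hf
    refine hf.norm.mono' ((measurable_deriv ψ).aestronglyMeasurable.mul hf.1)
      (ae_of_all _ fun x => ?_)
    rw [norm_mul, Real.norm_eq_abs, abs_of_nonneg (hψ.deriv_nonneg x)]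
    exact mul_le_of_le_one_left (norm_nonneg _) (hψ.deriv_le_one x)
  have hbd : ∀ {ψ : ℝ → ℝ}, ML ψ → ∀ {f : ℝ → ℝ}, Integrable f →
      |∫ x, deriv ψ x * f x| ≤ ∫ x, ‖f x‖ := by
    intro ψ hψ f hf
    rw [← Real.norm_eq_abs]
    refine norm_integral_le_of_norm_le hf.norm (ae_of_all _ fun x => ?_)
    rw [norm_mul, Real.norm_eq_abs, abs_of_nonneg (hψ.deriv_nonneg x)]
    exact mul_le_of_le_one_left (norm_nonneg _) (hψ.deriv_le_one x)
  -- for smooth test functions, integrate by parts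
  have hsmooth : ∀ g : ℝ → ℝ, HasCompactSupport g → ContDiff ℝ (⊤ : ℕ∞) g →
      Tendsto (fun n => ∫ x, deriv (φn n) x * g x) atTop (𝓝 (∫ x, deriv φ x * g x)) := by
    intro g hg1 hg2
    have hg3 : ContDiff ℝ 1 g := hg2.of_le (by exact_mod_cast le_top)
    obtain ⟨D, hD⟩ := hg3.lipschitzWith_of_hasCompactSupport hg1 one_ne_zero
    have hdc : Continuous (deriv g) := hg3.continuous_deriv le_rfl
    have hip : ∀ {ψ : ℝ → ℝ}, ML ψ →
        ∫ x, deriv ψ x * g x = ∫ x, - deriv g x * ψ x := by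
      intro ψ hψ
      have := hψ.lipschitz.integral_lineDeriv_mul_eq (μ := volume) hD hg1 1
      simpa [lineDeriv_one, lineDeriv_neg] using this
    have hgi : Integrable (fun x => deriv g x) := hdc.integrable_of_hasCompactSupport hg1.deriv
    rw [hip h]
    simp_rw [fun n => hip (hn n)]
    obtain ⟨N, hN⟩ := eventually_atTop.1 (Metric.tendstoUniformly_iff.1 hc 1 one_pos)
    have hφi : Integrable (fun x => deriv g x * φ x) :=
      (hdc.mul h.continuous).integrable_of_hasCompactSupport hg1.deriv.mul_right
    refine tendsto_integral_filter_of_dominated_convergence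
      (fun x => ‖deriv g x‖ + ‖deriv g x * φ x‖) (Eventually.of_forall fun n => ?_) ?_
      (hgi.norm.add hφi.norm) (ae_of_all _ fun x => ?_)
    · exact (hdc.neg.mul (hn n).continuous).aestronglyMeasurable
    · filter_upwards [eventually_ge_atTop N] with n hnN
      refine ae_of_all _ fun x => ?_
      have h1 := (hN n hnN x).le
      rw [dist_comm, dist_eq_norm] at h1
      have h2 : ‖φn n x‖ ≤ 1 + ‖φ x‖ := by
        have := norm_add_le (φn n x - φ x) (φ x)
        rw [sub_add_cancel] at this
        linarith
      rw [norm_mul, norm_mul, norm_neg]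
      nlinarith [mul_le_mul_of_nonneg_left h2 (norm_nonneg (deriv g x))]
    · exact (hc.tendsto_at x).const_mul _
  rw [Metric.tendsto_atTop]
  intro ε hε
  obtain ⟨g, hg1, hg2, hg3⟩ := MemLp.exist_eLpNorm_sub_le (p := 1) (by simp) le_rfl
    (memLp_one_iff_integrable.2 hf) (ε := ε / 4) (by positivity)
  have hgi : Integrable g := hg2.continuous.integrable_of_hasCompactSupport hg1
  have hfg : ∫ x, ‖f x - g x‖ ≤ ε / 4 := by
    have := integral_norm_eq_lintegral_enorm (hf.sub hgi).1
    simp only [Pi.sub_apply] at this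
    rw [this]
    rw [eLpNorm_one_eq_lintegral_enorm] at hg3
    exact ENNReal.toReal_le_of_le_ofReal (by positivity) hg3
  obtain ⟨N, hN⟩ := Metric.tendsto_atTop.1 (hsmooth g hg1 hg2) (ε / 4) (by positivity)
  refine ⟨N, fun n hnN => ?_⟩
  have h1 := hN n hnN
  have e : ∀ {ψ : ℝ → ℝ}, ML ψ → ∫ x, deriv ψ x * f x =
      (∫ x, deriv ψ x * (f x - g x)) + ∫ x, deriv ψ x * g x := by
    intro ψ hψ
    have := integral_add (hmul hψ (hf.sub hgi)) (hmul hψ hgi)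
    simp only [Pi.sub_apply] at this
    rw [← this]
    congr 1; ext x; ring
  have b1 := abs_le.1 ((hbd h (hf.sub hgi)).trans hfg)
  have b2 := abs_le.1 ((hbd (hn n) (hf.sub hgi)).trans hfg)
  rw [Real.dist_eq, abs_lt] at h1 ⊢
  rw [e h, e (hn n)]
  simp only [Pi.sub_apply] at b1 b2
  constructor <;> linarith [b1.1, b1.2, b2.1, b2.2, h1.1, h1.2]

/-! ### The logistic function and the optimal slope -/

/-- The slope `φ' = 1 - u₊u₋ / (σ(φ)(1-σ(φ)))` of the optimal profile at height `y = φ`,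
where `σ` is the logistic function and `u₋ = 1 - u₊`. -/
def qf (up y : ℝ) : ℝ := 1 - up * (1 - up) / (sigmoid y * (1 - sigmoid y))

/-- The logit of the optimal slope `qf`.  It is the coefficient of the null Lagrangian
`ψ(φ) φ'` that is subtracted from the integrand. -/
def psi (up y : ℝ) : ℝ := Real.log (qf up y) - Real.log (1 - qf up y)

lemma sigmoid_eq (y : ℝ) : sigmoid y = Real.exp y / (1 + Real.exp y) := by
  rw [sigmoid_def, Real.exp_neg]
  have := Real.exp_pos y
  field_simp
  ring

lemma one_sub_sigmoid (y : ℝ) : 1 - sigmoid y = 1 / (1 + Real.exp y) := by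
  rw [sigmoid_eq]
  have := Real.exp_pos y
  field_simp
  ring

lemma log_one_sub_sigmoid (y : ℝ) : Real.log (1 - sigmoid y) = -Real.log (1 + Real.exp y) := by
  rw [one_sub_sigmoid, one_div, Real.log_inv]

lemma log_sigmoid (y : ℝ) : Real.log (sigmoid y) = y - Real.log (1 + Real.exp y) := by
  have := Real.exp_pos y
  rw [sigmoid_eq, Real.log_div this.ne' (by positivity), Real.log_exp]

lemma phiOf_sigmoid (y : ℝ) : phiOf (sigmoid y) = y := by
  rw [phiOf, Real.log_div (sigmoid_pos y).ne' (sub_pos.2 (sigmoid_lt_one y)).ne', log_sigmoid,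
    log_one_sub_sigmoid]
  ring

lemma sigmoid_phiOf {v : ℝ} (h0 : 0 < v) (h1 : v < 1) : sigmoid (phiOf v) = v := by
  have h : v ∈ range sigmoid := by rw [range_sigmoid]; exact ⟨h0, h1⟩
  obtain ⟨y, rfl⟩ := h
  rw [phiOf_sigmoid]

lemma phiOf_one_sub (v : ℝ) : phiOf (1 - v) = -phiOf v := by
  rw [phiOf, phiOf, ← Real.log_inv, inv_div]
  congr 2; ring

lemma ww_pos (y : ℝ) : 0 < sigmoid y * (1 - sigmoid y) :=
  mul_pos (sigmoid_pos y) (sub_pos.2 (sigmoid_lt_one y))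

lemma log_ww (y : ℝ) :
    Real.log (sigmoid y * (1 - sigmoid y)) = y - 2 * Real.log (1 + Real.exp y) := by
  rw [Real.log_mul (sigmoid_pos y).ne' (sub_pos.2 (sigmoid_lt_one y)).ne', log_sigmoid,
    log_one_sub_sigmoid]
  ring

/-- The standing assumption on `up = u₊`. -/
structure Hup (up : ℝ) : Prop where
  half : 1 / 2 < up
  one : up < 1

namespace Hup
variable {up : ℝ} (h : Hup up)
include h

lemma pos : 0 < up := by linarith [h.half]

lemma a_pos : 0 < up * (1 - up) := mul_pos h.pos (sub_pos.2 h.one)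

lemma sig_b : sigmoid (phiOf up) = up := sigmoid_phiOf h.pos h.one

lemma sig_neg_b : sigmoid (-phiOf up) = 1 - up := by rw [sigmoid_neg, h.sig_b]

lemma b_pos : 0 < phiOf up := by
  rw [← sigmoid_lt_iff, h.sig_b, sigmoid_zero]
  linarith [h.half]

lemma sig_mem {y : ℝ} (hy : y ∈ Icc (-phiOf up) (phiOf up)) :
    1 - up ≤ sigmoid y ∧ sigmoid y ≤ up := by
  have h1 := sigmoid_le hy.1
  have h2 := sigmoid_le hy.2
  rw [h.sig_neg_b] at h1
  rw [h.sig_b] at h2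
  exact ⟨h1, h2⟩

lemma a_le {y : ℝ} (hy : y ∈ Icc (-phiOf up) (phiOf up)) :
    up * (1 - up) ≤ sigmoid y * (1 - sigmoid y) := by
  obtain ⟨h1, h2⟩ := h.sig_mem hy
  nlinarith [mul_nonneg (sub_nonneg.2 h1) (sub_nonneg.2 h2)]

lemma qf_nonneg {y : ℝ} (hy : y ∈ Icc (-phiOf up) (phiOf up)) : 0 ≤ qf up y :=
  sub_nonneg.2 ((div_le_one (ww_pos y)).2 (h.a_le hy))

lemma qf_lt_one (y : ℝ) : qf up y < 1 := sub_lt_self _ (div_pos h.a_pos (ww_pos y))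

lemma qf_eq_zero {y : ℝ} (hq : qf up y = 0) : y = phiOf up ∨ y = -phiOf up := by
  have h1 : up * (1 - up) = sigmoid y * (1 - sigmoid y) := by
    rw [qf, sub_eq_zero] at hq
    exact ((div_eq_one_iff_eq (ww_pos y).ne').1 hq.symm)
  have h2 : (sigmoid y - up) * (sigmoid y - (1 - up)) = 0 := by linear_combination h1
  rcases mul_eq_zero.1 h2 with h3 | h3
  · left
    rw [← sigmoid_inj, h.sig_b]; linarith
  · right
    rw [← sigmoid_inj, h.sig_neg_b]; linarith

lemma log_one_sub_qf (y : ℝ) : Real.log (1 - qf up y) =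
    Real.log (up * (1 - up)) - (y - 2 * Real.log (1 + Real.exp y)) := by
  rw [qf, sub_sub_cancel, Real.log_div h.a_pos.ne' (ww_pos y).ne', log_ww]

/-- The integrand is a sum of two relative entropies and of the null Lagrangian `p ψ(y)`. -/
lemma gg_eq (u y p : ℝ) : gg u y p - gg up (phiOf up) 0 =
    kl u (sigmoid y) + kl p (qf up y) + p * psi up y := by
  have e1 : gg up (phiOf up) 0 = Real.log (up * (1 - up)) := by
    have h1 := log_sigmoid (phiOf up)
    have h2 := log_one_sub_sigmoid (phiOf up)
    rw [h.sig_b] at h1 h2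
    have h3 : phiOf up = Real.log up - Real.log (1 - up) :=
      Real.log_div h.pos.ne' (sub_pos.2 h.one).ne'
    rw [Real.log_mul h.pos.ne' (sub_pos.2 h.one).ne', gg, ← neg_eq_iff_eq_neg.2 h2]
    simp only [S, h3]
    simp
    ring
  rw [e1, gg, kl, kl, psi, h.log_one_sub_qf, log_sigmoid, log_one_sub_sigmoid]
  ring

lemma neg_log_le_right {y : ℝ} (hy : y ∈ Icc (-phiOf up) (phiOf up)) :
    -Real.log (1 - qf up y) ≤ phiOf up - y ∧ -Real.log (1 - qf up y) ≤ y + phiOf up := by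
  have hb := log_ww (phiOf up)
  have hnb := log_ww (-phiOf up)
  rw [h.sig_b] at hb
  rw [h.sig_neg_b, sub_sub_cancel, mul_comm] at hnb
  have mono : ∀ {x y : ℝ}, x ≤ y → Real.log (1 + Real.exp x) ≤ Real.log (1 + Real.exp y) := by
    intro x y hxy
    have := Real.exp_pos x
    exact Real.log_le_log (by positivity) (by gcongr)
  have lip : ∀ {x y : ℝ}, x ≤ y →
      Real.log (1 + Real.exp y) - Real.log (1 + Real.exp x) ≤ y - x := by
    intro x y hxy
    have h1 := (sigmoid_le hxy)
    have h2 := Real.log_le_log (sigmoid_pos x) h1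
    rw [log_sigmoid, log_sigmoid] at h2
    linarith
  rw [h.log_one_sub_qf]
  constructor
  · have := lip hy.2
    linarith
  · have := mono hy.1
    linarith

lemma sig_sub {x y : ℝ} (hx : -phiOf up ≤ x) (hxy : x ≤ y) (hy : y ≤ phiOf up) :
    up * (1 - up) * (y - x) ≤ sigmoid y - sigmoid x := by
  refine (convex_Icc (-phiOf up) (phiOf up)).mul_sub_le_image_sub_of_le_deriv
    continuous_sigmoid.continuousOn differentiable_sigmoid.differentiableOn ?_ x
    ⟨hx, hxy.trans hy⟩ y ⟨hx.trans hxy, hy⟩ hxy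
  intro z hz
  rw [deriv_sigmoid]
  exact h.a_le (interior_subset hz)

lemma qf_ge {y : ℝ} (hy : y ∈ Icc (-phiOf up) (phiOf up)) :
    (up - sigmoid y) * (sigmoid y - (1 - up)) ≤ qf up y := by
  obtain ⟨h1, h2⟩ := h.sig_mem hy
  have e : qf up y = (up - sigmoid y) * (sigmoid y - (1 - up)) / (sigmoid y * (1 - sigmoid y)) := by
    rw [qf, eq_div_iff (ww_pos y).ne', sub_mul, div_mul_cancel₀ _ (ww_pos y).ne']; ring
  rw [e]
  refine le_div_self (mul_nonneg (sub_nonneg.2 h2) (sub_nonneg.2 h1)) (ww_pos y) ?_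
  nlinarith [sq_nonneg (sigmoid y - 1 / 2)]

lemma qf_ge_right {y : ℝ} (h0 : 0 ≤ y) (hy : y ≤ phiOf up) :
    up * (1 - up) * (up - 1 / 2) * (phiOf up - y) ≤ qf up y := by
  have hb := h.b_pos
  refine le_trans ?_ (h.qf_ge ⟨by linarith, hy⟩)
  have h1 := h.sig_sub (by linarith) hy le_rfl
  rw [h.sig_b] at h1
  have h2 := sigmoid_le h0
  rw [sigmoid_zero] at h2
  have h3 := h.half
  have h4 : 0 ≤ up * (1 - up) * (phiOf up - y) := mul_nonneg h.a_pos.le (by linarith)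
  calc _ = up * (1 - up) * (phiOf up - y) * (up - 1 / 2) := by ring
    _ ≤ (up - sigmoid y) * (up - 1 / 2) := mul_le_mul_of_nonneg_right h1 (by linarith)
    _ ≤ _ := mul_le_mul_of_nonneg_left (by norm_num at h2 ⊢; linarith) (by linarith)

lemma qf_ge_left {y : ℝ} (h0 : y ≤ 0) (hy : -phiOf up ≤ y) :
    up * (1 - up) * (up - 1 / 2) * (y + phiOf up) ≤ qf up y := by
  have hb := h.b_pos
  refine le_trans ?_ (h.qf_ge ⟨hy, by linarith⟩)
  have h1 := h.sig_sub le_rfl hy (by linarith)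
  rw [h.sig_neg_b] at h1
  have h2 := sigmoid_le h0
  rw [sigmoid_zero] at h2
  have h3 := h.half
  have h4 : 0 ≤ up * (1 - up) * (y + phiOf up) := mul_nonneg h.a_pos.le (by linarith)
  calc _ = (up - 1 / 2) * (up * (1 - up) * (y - -phiOf up)) := by ring
    _ ≤ (up - 1 / 2) * (sigmoid y - (1 - up)) := mul_le_mul_of_nonneg_left h1 (by linarith)
    _ ≤ _ := mul_le_mul_of_nonneg_right (by norm_num at h2 ⊢; linarith) (by linarith)

omit h in
lemma analyticAt_qf (y : ℝ) : AnalyticAt ℝ (qf up) y := by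
  unfold qf
  refine analyticAt_const.sub (analyticAt_const.div
    (analyticAt_sigmoid.mul (analyticAt_const.sub analyticAt_sigmoid)) (ww_pos y).ne')

omit h in
lemma continuous_qf : Continuous (qf up) :=
  continuous_iff_continuousAt.2 fun y => (analyticAt_qf y).continuousAt

omit h in
lemma exists_lipschitz_qf :
    ∃ K, LipschitzOnWith K (qf up) (Icc (-phiOf up) (phiOf up)) := by
  refine ContDiffOn.exists_lipschitzOnWith (n := 1) (fun y _ => ?_) one_ne_zero (convex_Icc _ _)
    isCompact_Icc
  exact (analyticAt_qf y).contDiffAt.contDiffWithinAt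

/-- `ψ` has only logarithmic singularities. -/
lemma integrableOn_psi : IntegrableOn (psi up) (Icc (-phiOf up) (phiOf up)) := by
  have h1 : IntervalIntegrable (Real.log ∘ qf up) volume (-phiOf up) (phiOf up) :=
    MeromorphicOn.intervalIntegrable_log fun y _ => (analyticAt_qf y).meromorphicAt
  have h2 : Continuous fun y => Real.log (1 - qf up y) :=
    (continuous_const.sub continuous_qf).log fun y => (sub_pos.2 (h.qf_lt_one y)).ne'
  have := h1.sub (h2.intervalIntegrable (μ := volume) (-phiOf up) (phiOf up))
  rwa [intervalIntegrable_iff_integrableOn_Icc_of_le (by linarith [h.b_pos])] at this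

end Hup

/-! ### The functional as a constant plus relative entropies -/

lemma ML.ae_diff {f : ℝ → ℝ} (h : ML f) : ∀ᵐ x, DifferentiableAt ℝ f x :=
  h.lipschitz.ae_differentiableAt_real

lemma MemC.ml {pm pp : ℝ} {φ : ℝ → ℝ} (h : MemC pm pp φ) : ML φ := h.1

lemma MemC.mem_Icc {pm pp : ℝ} {φ : ℝ → ℝ} (h : MemC pm pp φ) (x : ℝ) : φ x ∈ Icc pm pp :=
  ⟨h.ml.monotone.le_of_tendsto h.2.1 x, h.ml.monotone.ge_of_tendsto h.2.2 x⟩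

lemma MemC.exists_eq {pm pp : ℝ} {φ : ℝ → ℝ} (h : MemC pm pp φ) {y : ℝ} (h1 : pm < y)
    (h2 : y < pp) : ∃ x, φ x = y := by
  obtain ⟨x1, hx1⟩ := (h.2.1.eventually (gt_mem_nhds h1)).exists
  obtain ⟨x2, hx2⟩ := (h.2.2.eventually (lt_mem_nhds h2)).exists
  exact mem_range_of_exists_le_of_exists_ge h.ml.continuous ⟨x1, hx1.le⟩ ⟨x2, hx2.le⟩

/-- Change of variables `y = φ(x)` along a (not necessarily strictly) monotone profile. -/
lemma MemC.change_of_variables {pm pp : ℝ} {φ : ℝ → ℝ} (h : MemC pm pp φ) {g : ℝ → ℝ}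
    (hg : IntegrableOn g (Icc pm pp)) :
    Integrable (fun x => deriv φ x * g (φ x)) ∧
      ∫ x, deriv φ x * g (φ x) = ∫ y in Icc pm pp, g y := by
  set s := {x | DifferentiableAt ℝ φ x} with hs
  have hsm : MeasurableSet s := measurableSet_of_differentiableAt ℝ φ
  have hae : ∀ᵐ x, x ∈ s := h.ml.ae_diff
  -- Lipschitz maps send null sets to null sets
  have hnull : volume (φ '' sᶜ) = 0 := by
    have h0 : volume sᶜ = 0 := hae
    have := h.ml.lipschitz.hausdorffMeasure_image_le (d := 1) zero_le_one sᶜ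
    rw [hausdorffMeasure_real, h0] at this
    simpa using this
  have himg : (φ '' s : Set ℝ) =ᵐ[volume] Icc pm pp := by
    have h1 : φ '' s ⊆ Icc pm pp := by
      rintro _ ⟨x, -, rfl⟩; exact h.mem_Icc x
    refine h1.eventuallyLE.antisymm ?_
    rw [ae_le_set]
    refine measure_mono_null (t := {pm, pp} ∪ φ '' sᶜ) ?_
      (measure_union_null (Set.Finite.measure_zero (by simp) _) hnull)
    rintro y ⟨hy, hys⟩
    by_cases hy1 : y = pm
    · left; simp [hy1]
    by_cases hy2 : y = pp
    · left; simp [hy2]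
    obtain ⟨x, rfl⟩ := h.exists_eq (lt_of_le_of_ne hy.1 (Ne.symm hy1)) (lt_of_le_of_ne hy.2 hy2)
    exact Or.inr ⟨x, fun hx => hys ⟨x, hx, rfl⟩, rfl⟩
  have hd : ∀ x ∈ s, HasDerivWithinAt φ (deriv φ x) s x :=
    fun x hx => (DifferentiableAt.hasDerivAt hx).hasDerivWithinAt
  have hres : volume.restrict s = (volume : Measure ℝ) := Measure.restrict_eq_self_of_ae_mem hae
  constructor
  · have := (integrableOn_image_iff_integrableOn_deriv_smul_of_monotoneOn hsm hd
      (h.ml.monotone.monotoneOn s) g).1 (hg.congr_set_ae himg)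
    rwa [IntegrableOn, hres] at this
  · have := integral_image_eq_integral_deriv_smul_of_monotoneOn hsm hd
      (h.ml.monotone.monotoneOn s) g
    rw [hres, setIntegral_congr_set himg] at this
    simpa using this.symm

lemma ml_sigmoid : ML sigmoid := by
  intro x y hxy
  refine ⟨sigmoid_le hxy, ?_⟩
  have := (convex_univ (𝕜 := ℝ) (E := ℝ)).image_sub_le_mul_sub_of_deriv_le (f := sigmoid) (C := 1)
    continuous_sigmoid.continuousOn differentiable_sigmoid.differentiableOn ?_ x trivial y trivial
    hxy
  · simpa using this
  · intro z _
    rw [deriv_sigmoid]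
    nlinarith [sq_nonneg (sigmoid z - 1 / 2)]

lemma measurable_kl {p q : ℝ → ℝ} (hp : Measurable p) (hq : Measurable q) :
    Measurable (fun x => kl (p x) (q x)) := by
  unfold kl S
  fun_prop

/-- The excess of `G` over its minimum. -/
def excess (up : ℝ) (u φ : ℝ → ℝ) : ENNReal :=
  (∫⁻ x, ENNReal.ofReal (kl (u x) (sigmoid (φ x)))) +
    ∫⁻ x, ENNReal.ofReal (kl (deriv φ x) (qf up (φ x)))

/-- The minimum of `G`. -/
def Kmin (up : ℝ) : ℝ := ∫ y in Icc (-phiOf up) (phiOf up), psi up y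

section
variable {up : ℝ} (h : Hup up) {u φ : ℝ → ℝ} (hu : MemU u)
  (hφ : MemC (-phiOf up) (phiOf up) φ)

include hu in
omit h hφ in
lemma adm_left (x : ℝ) : Adm (u x) (sigmoid (φ x)) :=
  ⟨(hu.2 x).1, (hu.2 x).2, sigmoid_nonneg _, sigmoid_lt_one _,
    fun h0 => absurd h0 (sigmoid_pos _).ne'⟩

include h hφ in
lemma adm_right (x : ℝ) : Adm (deriv φ x) (qf up (φ x)) := by
  refine ⟨hφ.ml.deriv_nonneg x, hφ.ml.deriv_le_one x, h.qf_nonneg (hφ.mem_Icc x), h.qf_lt_one _,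
    fun h0 => ?_⟩
  -- `qf` vanishes only at the extreme values of `φ`, where the derivative vanishes
  rcases h.qf_eq_zero h0 with h1 | h1
  · refine IsLocalMax.deriv_eq_zero (Eventually.of_forall fun y => ?_)
    rw [h1]; exact (hφ.mem_Icc y).2
  · refine IsLocalMin.deriv_eq_zero (Eventually.of_forall fun y => ?_)
    rw [h1]; exact (hφ.mem_Icc y).1

include h hu hφ in
lemma sq_integrable_iff
    (hi : Integrable (fun x => φ x - theta (-phiOf up) (phiOf up) x)) :
    Integrable (fun x => (u x - theta (1 - up) up x) ^ 2) ↔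
      Integrable (fun x => (u x - sigmoid (φ x)) ^ 2) := by
  have hth : ∀ x, theta (1 - up) up x = sigmoid (theta (-phiOf up) (phiOf up) x) := by
    intro x
    unfold theta
    split_ifs
    · rw [h.sig_neg_b]
    · rw [h.sig_b]
  have hm : Measurable (theta (1 - up) up) :=
    Measurable.ite measurableSet_Iio measurable_const measurable_const
  have hφm : Measurable fun x => sigmoid (φ x) :=
    (continuous_sigmoid.comp hφ.ml.continuous).measurable
  have hsub : ∀ x, (sigmoid (φ x) - theta (1 - up) up x) ^ 2 ≤
      ‖φ x - theta (-phiOf up) (phiOf up) x‖ := by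
    intro x
    rw [hth]
    set t := theta (-phiOf up) (phiOf up) x
    have h1 := ml_sigmoid.lipschitz.dist_le_mul (φ x) t
    rw [Real.dist_eq, Real.dist_eq, NNReal.coe_one, one_mul] at h1
    have h2 : |sigmoid (φ x) - sigmoid t| ≤ 1 := by
      have := sigmoid_pos (φ x)
      have := sigmoid_pos t
      have := sigmoid_lt_one (φ x)
      have := sigmoid_lt_one t
      rw [abs_le]; constructor <;> linarith
    rw [Real.norm_eq_abs, ← sq_abs]
    nlinarith [abs_nonneg (sigmoid (φ x) - sigmoid t)]
  have key : ∀ a b c : ℝ, (a - b) ^ 2 ≤ 2 * (a - c) ^ 2 + 2 * (c - b) ^ 2 := by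
    intro a b c
    nlinarith [sq_nonneg (a - c - (c - b))]
  constructor
  · intro hI
    refine ((hI.const_mul 2).add (hi.norm.const_mul 2)).mono'
      ((hu.1.sub hφm).pow_const 2).aestronglyMeasurable (ae_of_all _ fun x => ?_)
    rw [Real.norm_of_nonneg (sq_nonneg _)]
    have k := key (u x) (sigmoid (φ x)) (theta (1 - up) up x)
    have s := hsub x
    rw [← sq_abs, abs_sub_comm, sq_abs] at s
    simp only [Pi.add_apply]
    linarith
  · intro hI
    refine ((hI.const_mul 2).add (hi.norm.const_mul 2)).mono'
      ((hu.1.sub hm).pow_const 2).aestronglyMeasurable (ae_of_all _ fun x => ?_)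
    rw [Real.norm_of_nonneg (sq_nonneg _)]
    have k := key (u x) (theta (1 - up) up x) (sigmoid (φ x))
    have s := hsub x
    simp only [Pi.add_apply]
    linarith

include h hφ in
/-- The slope entropy controls the distance of `φ` to the step function. -/
lemma integrable_of_kl_right
    (hi : Integrable (fun x => kl (deriv φ x) (qf up (φ x)))) :
    Integrable (fun x => φ x - theta (-phiOf up) (phiOf up) x) := by
  have hb := h.b_pos
  have hd : Integrable (fun x => deriv φ x) := by
    have := (hφ.change_of_variables (g := fun _ => 1)
      (integrableOn_const (by simp) (by simp))).1
    simpa using this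
  have hq : Integrable (fun x => qf up (φ x)) := by
    refine ((hi.add hd).const_mul 2).mono'
      (Hup.continuous_qf.comp hφ.ml.continuous).aestronglyMeasurable (ae_of_all _ fun x => ?_)
    rw [Real.norm_of_nonneg (h.qf_nonneg (hφ.mem_Icc x))]
    exact q_le_kl (adm_right h hφ x)
  obtain ⟨x0, hx0⟩ := hφ.exists_eq (neg_lt_zero.2 hb) hb
  have hc : 0 < up * (1 - up) * (up - 1 / 2) := mul_pos h.a_pos (by linarith [h.half])
  set c := up * (1 - up) * (up - 1 / 2)
  have hind : Integrable ((Icc (-|x0|) |x0|).indicator (fun _ => 2 * phiOf up)) :=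
    (integrable_indicator_iff measurableSet_Icc).2 continuous_const.integrableOn_Icc
  have hm : Measurable (theta (-phiOf up) (phiOf up)) :=
    Measurable.ite measurableSet_Iio measurable_const measurable_const
  refine ((hq.const_mul c⁻¹).add hind).mono'
    (hφ.ml.continuous.measurable.sub hm).aestronglyMeasurable (ae_of_all _ fun x => ?_)
  have hI := hφ.mem_Icc x
  have hqn : 0 ≤ c⁻¹ * qf up (φ x) := mul_nonneg (inv_nonneg.2 hc.le) (h.qf_nonneg hI)
  have hin : 0 ≤ (Icc (-|x0|) |x0|).indicator (fun _ => 2 * phiOf up) x :=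
    indicator_nonneg (fun _ _ => by linarith) x
  have hx1 := neg_abs_le x0
  have hx2 := le_abs_self x0
  have hx3 := abs_nonneg x0
  simp only [Pi.add_apply, theta, Real.norm_eq_abs]
  -- outside the interval between `0` and the zero `x0` of `φ`, the signs of `x` and `φ x` agree
  split_ifs with hx
  · rw [abs_of_nonneg (by linarith [hI.1])]
    rcases le_or_gt (φ x) 0 with h0 | h0
    · have := h.qf_ge_left h0 hI.1
      rw [mul_comm, ← le_div_iff₀ hc, div_eq_inv_mul] at this
      linarith
    · have : x0 < x := hφ.ml.monotone.reflect_lt (by rw [hx0]; exact h0)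
      have hmem : x ∈ Icc (-|x0|) |x0| := ⟨by linarith, by linarith⟩
      rw [indicator_of_mem hmem]
      linarith [hI.2]
  · rw [abs_of_nonpos (by linarith [hI.2])]
    rcases le_or_gt 0 (φ x) with h0 | h0
    · have := h.qf_ge_right h0 hI.2
      rw [mul_comm, ← le_div_iff₀ hc, div_eq_inv_mul] at this
      linarith
    · have : x < x0 := hφ.ml.monotone.reflect_lt (by rw [hx0]; exact h0)
      have hmem : x ∈ Icc (-|x0|) |x0| := ⟨by linarith, by linarith⟩
      rw [indicator_of_mem hmem]
      linarith [hI.1]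

lemma coe_lintegral_ofReal {f : ℝ → ℝ} (hf : Integrable f) (h0 : ∀ x, 0 ≤ f x) :
    ((∫⁻ x, ENNReal.ofReal (f x) : ENNReal) : EReal) = ((∫ x, f x : ℝ) : EReal) := by
  rw [← ofReal_integral_eq_lintegral_ofReal hf (ae_of_all _ h0), EReal.coe_ennreal_ofReal,
    max_eq_left (integral_nonneg h0)]

include h hu hφ in
/-- `G` equals its minimum plus the excess; in particular the domain of `G` is exactly the set
where the excess is finite. -/
lemma GE_eq : GE (1 - up) up u φ = ((Kmin up : ℝ) : EReal) + ((excess up u φ : ENNReal) : EReal) := by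
  obtain ⟨hψi, hψ⟩ := hφ.change_of_variables h.integrableOn_psi
  have hφm := hφ.ml.continuous
  have m1 : Measurable fun x => kl (u x) (sigmoid (φ x)) :=
    measurable_kl hu.1 (continuous_sigmoid.comp hφm).measurable
  have m2 : Measurable fun x => kl (deriv φ x) (qf up (φ x)) :=
    measurable_kl (measurable_deriv φ) (Hup.continuous_qf.comp hφm).measurable
  have n1 : ∀ x, 0 ≤ kl (u x) (sigmoid (φ x)) := fun x => kl_nonneg (adm_left hu x)
  have n2 : ∀ x, 0 ≤ kl (deriv φ x) (qf up (φ x)) := fun x => kl_nonneg (adm_right h hφ x)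
  rw [GE, phiOf_one_sub]
  split_ifs with hdom
  · have i1 : Integrable fun x => kl (u x) (sigmoid (φ x)) := by
      refine (((sq_integrable_iff h hu hφ hdom.2).1 hdom.1).div_const (up * (1 - up))).mono'
        m1.aestronglyMeasurable (ae_of_all _ fun x => ?_)
      rw [Real.norm_of_nonneg (n1 x)]
      refine (kl_le_sq (hu.2 x).1 (hu.2 x).2 (sigmoid_pos _) (sigmoid_lt_one _)).trans ?_
      exact div_le_div_of_nonneg_left (sq_nonneg _) h.a_pos (h.a_le (hφ.mem_Icc x))
    have i2 : Integrable fun x => kl (deriv φ x) (qf up (φ x)) := by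
      refine (hdom.2.norm.sub hψi).mono' m2.aestronglyMeasurable (ae_of_all _ fun x => ?_)
      rw [Real.norm_of_nonneg (n2 x)]
      have hS := S_nonpos (hφ.ml.deriv_nonneg x) (hφ.ml.deriv_le_one x)
      have hlog : -Real.log (1 - qf up (φ x)) ≤ ‖φ x - theta (-phiOf up) (phiOf up) x‖ := by
        obtain ⟨l1, l2⟩ := h.neg_log_le_right (hφ.mem_Icc x)
        rw [Real.norm_eq_abs, theta]
        split_ifs
        · refine l2.trans (le_trans (le_of_eq ?_) (le_abs_self _)); ring
        · refine l1.trans (le_trans (le_of_eq ?_) (neg_le_abs _)); ring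
      simp only [Pi.sub_apply, kl, psi]
      linarith
    have e : (fun x => gg (u x) (φ x) (deriv φ x) - gg up (phiOf up) 0) = fun x =>
        (kl (u x) (sigmoid (φ x)) + kl (deriv φ x) (qf up (φ x))) +
          deriv φ x * psi up (φ x) := by
      ext x; exact h.gg_eq _ _ _
    have i12 : Integrable fun x => kl (u x) (sigmoid (φ x)) + kl (deriv φ x) (qf up (φ x)) :=
      i1.add i2
    rw [e, integral_add i12 hψi, integral_add i1 i2, hψ, excess, EReal.coe_ennreal_add,
      coe_lintegral_ofReal i1 n1, coe_lintegral_ofReal i2 n2, EReal.coe_add, EReal.coe_add, Kmin,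
      add_comm]
  · suffices excess up u φ = ⊤ by rw [this]; simp
    by_contra hne
    obtain ⟨f1, f2⟩ := ENNReal.add_ne_top.1 hne
    have i1 := (lintegral_ofReal_ne_top_iff_integrable m1.aestronglyMeasurable
      (ae_of_all _ n1)).1 f1
    have i2 := (lintegral_ofReal_ne_top_iff_integrable m2.aestronglyMeasurable
      (ae_of_all _ n2)).1 f2
    have j2 := integrable_of_kl_right h hφ i2
    refine hdom ⟨(sq_integrable_iff h hu hφ j2).2 ?_, j2⟩
    refine (i1.const_mul 4).mono' ((hu.1.sub
      (continuous_sigmoid.comp hφm).measurable).pow_const 2).aestronglyMeasurable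
      (ae_of_all _ fun x => ?_)
    rw [Real.norm_of_nonneg (sq_nonneg _)]
    have := sq_le_kl (adm_left hu (φ := φ) x)
    linarith

end

/-! ### Lower semicontinuity -/

lemma liminf_add_liminf_le (a b : ℕ → ENNReal) :
    liminf a atTop + liminf b atTop ≤ liminf (fun n => a n + b n) atTop := by
  simp only [liminf_eq_iSup_iInf_of_nat]
  rw [ENNReal.iSup_add_iSup_of_monotone]
  · exact iSup_mono fun n => le_iInf₂ fun i hi =>
      add_le_add (iInf₂_le i hi) (iInf₂_le i hi)
  · exact fun m n hmn => le_iInf₂ fun i hi => iInf₂_le i (hmn.trans hi)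
  · exact fun m n hmn => le_iInf₂ fun i hi => iInf₂_le i (hmn.trans hi)

section
variable {up : ℝ} (h : Hup up)
include h

/-- Both entropies are covered by `lsc_kl`: the first with `pn = un`, the second with
`pn = φn'`, which converges weakly-* because `φn → φ` uniformly. -/
lemma excess_lsc {u φ : ℝ → ℝ} {un φn : ℕ → ℝ → ℝ} (hu : MemU u)
    (hφ : MemC (-phiOf up) (phiOf up) φ) (hun : ∀ n, MemU (un n))
    (hφn : ∀ n, MemC (-phiOf up) (phiOf up) (φn n)) (hc : ConvX un φn u φ) :
    excess up u φ ≤ liminf (fun n => excess up (un n) (φn n)) atTop := by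
  have l1 := lsc_kl (p := u) (q := fun x => sigmoid (φ x)) (pn := un)
    (qn := fun n x => sigmoid (φn n x)) hu.1
    (continuous_sigmoid.comp hφ.ml.continuous).measurable (fun n => (hun n).1)
    (fun n => (continuous_sigmoid.comp (hφn n).ml.continuous).measurable)
    (adm_left hu) (fun n => adm_left (hun n)) hc.1
    (fun x => (continuous_sigmoid.tendsto _).comp (hc.2.tendsto_at x))
  have l2 := lsc_kl (p := deriv φ) (q := fun x => qf up (φ x)) (pn := fun n => deriv (φn n))
    (qn := fun n x => qf up (φn n x)) (measurable_deriv φ)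
    (Hup.continuous_qf.comp hφ.ml.continuous).measurable (fun n => measurable_deriv _)
    (fun n => (Hup.continuous_qf.comp (hφn n).ml.continuous).measurable)
    (adm_right h hφ) (fun n => adm_right h (hφn n))
    (fun f hf => hφ.ml.tendsto_deriv (fun n => (hφn n).ml) hc.2 hf)
    (fun x => (Hup.continuous_qf.tendsto _).comp (hc.2.tendsto_at x))
  refine (add_le_add l1 l2).trans ?_
  exact liminf_add_liminf_le _ _

lemma GE_lsc {u φ : ℝ → ℝ} {un φn : ℕ → ℝ → ℝ} (hu : MemU u)
    (hφ : MemC (-phiOf up) (phiOf up) φ) (hun : ∀ n, MemU (un n))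
    (hφn : ∀ n, MemC (-phiOf up) (phiOf up) (φn n)) (hc : ConvX un φn u φ) :
    GE (1 - up) up u φ ≤ liminf (fun n => GE (1 - up) up (un n) (φn n)) atTop := by
  have hmono : Monotone fun x : ENNReal => ((Kmin up : ℝ) : EReal) + (x : EReal) :=
    fun x y hxy => add_le_add le_rfl (EReal.coe_ennreal_le_coe_ennreal_iff.2 hxy)
  have hcont : Continuous fun x : ENNReal => ((Kmin up : ℝ) : EReal) + (x : EReal) := by
    rw [continuous_iff_continuousAt]
    intro x
    exact (EReal.continuousAt_add (Or.inl (EReal.coe_ne_top _)) (Or.inl (EReal.coe_ne_bot _))).comp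
      (continuousAt_const.prodMk continuous_coe_ennreal_ereal.continuousAt)
  have e := hmono.map_liminf_of_continuousAt (F := atTop)
    (fun n => excess up (un n) (φn n)) hcont.continuousAt
  have e' : (fun n => GE (1 - up) up (un n) (φn n)) =
      (fun x : ENNReal => ((Kmin up : ℝ) : EReal) + (x : EReal)) ∘
        fun n => excess up (un n) (φn n) := by
    ext n; exact GE_eq h (hun n) (hφn n)
  rw [GE_eq h hu hφ, e', ← e]
  exact hmono (excess_lsc h hu hφ hun hφn hc)

end

/-! ### The standing wave -/

lemma tanh_eq_sigmoid (x : ℝ) : Real.tanh x = 2 * sigmoid (2 * x) - 1 := by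
  rw [Real.tanh_eq_sinh_div_cosh, sigmoid_eq, Real.sinh_eq, Real.cosh_eq, Real.exp_neg,
    two_mul x, Real.exp_add]
  have := Real.exp_pos x
  field_simp
  ring

lemma ubar_eq (up x : ℝ) :
    ubarStanding up x = 1 - up + (2 * up - 1) * sigmoid ((2 * up - 1) * x) := by
  rw [ubarStanding, tanh_eq_sigmoid, show 2 * ((up - 1 / 2) * x) = (2 * up - 1) * x by ring]
  ring

/-- The chemical potential `φ̄ = s'(ū)` of the standing wave. -/
def phibar (up x : ℝ) : ℝ := phiOf (ubarStanding up x)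

section
variable {up : ℝ} (h : Hup up)
include h

lemma ubar_mem (x : ℝ) : ubarStanding up x ∈ Ioo (1 - up) up := by
  have hm : 0 < 2 * up - 1 := by linarith [h.half]
  have s0 := mul_pos hm (sigmoid_pos ((2 * up - 1) * x))
  have s1 := mul_lt_mul_of_pos_left (sigmoid_lt_one ((2 * up - 1) * x)) hm
  rw [ubar_eq]
  constructor <;> linarith

lemma sigmoid_phibar (x : ℝ) : sigmoid (phibar up x) = ubarStanding up x := by
  have := ubar_mem h x
  exact sigmoid_phiOf (by linarith [this.1, h.one]) (by linarith [this.2, h.one])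

omit h in
/-- The first-order equation `ū' = ū(1-ū) - u₊(1-u₊)`. -/
lemma hasDerivAt_ubar (x : ℝ) : HasDerivAt (ubarStanding up)
    (ubarStanding up x * (1 - ubarStanding up x) - up * (1 - up)) x := by
  have h1 : HasDerivAt (fun x => (2 * up - 1) * x) (2 * up - 1) x := by
    simpa using (hasDerivAt_id x).const_mul (2 * up - 1)
  have h2 := (((hasDerivAt_sigmoid _).comp x h1).const_mul (2 * up - 1)).const_add (1 - up)
  refine (h2.congr_of_eventuallyEq (.of_forall (ubar_eq up))).congr_deriv ?_
  rw [ubar_eq]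
  ring

lemma hasDerivAt_phibar (x : ℝ) : HasDerivAt (phibar up) (qf up (phibar up x)) x := by
  have hm := ubar_mem h x
  have p0 : 0 < ubarStanding up x := by linarith [hm.1, h.one]
  have p1 : 0 < 1 - ubarStanding up x := by linarith [hm.2, h.one]
  have hd := hasDerivAt_ubar (up := up) x
  have := (hd.div (hd.const_sub 1) p1.ne').log (div_pos p0 p1).ne'
  refine this.congr_deriv ?_
  rw [qf, sigmoid_phibar h, show (ubarStanding up / fun x => 1 - ubarStanding up x) x =
    ubarStanding up x / (1 - ubarStanding up x) from rfl]
  field_simp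
  ring

lemma tendsto_phibar_atTop : Tendsto (phibar up) atTop (𝓝 (phiOf up)) := by
  have hm : 0 < 2 * up - 1 := by linarith [h.half]
  have t : Tendsto (ubarStanding up) atTop (𝓝 up) := by
    have := ((tendsto_sigmoid_atTop.comp (tendsto_id.const_mul_atTop hm)).const_mul
      (2 * up - 1)).const_add (1 - up)
    rw [show 1 - up + (2 * up - 1) * 1 = up by ring] at this
    exact this.congr fun x => (ubar_eq up x).symm
  have p1 : 1 - up ≠ 0 := (sub_pos.2 h.one).ne'
  exact (t.div (t.const_sub 1) p1).log (div_ne_zero h.pos.ne' p1)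

lemma tendsto_phibar_atBot : Tendsto (phibar up) atBot (𝓝 (-phiOf up)) := by
  have hm : 0 < 2 * up - 1 := by linarith [h.half]
  have t : Tendsto (ubarStanding up) atBot (𝓝 (1 - up)) := by
    have := ((tendsto_sigmoid_atBot.comp (tendsto_id.const_mul_atBot hm)).const_mul
      (2 * up - 1)).const_add (1 - up)
    rw [mul_zero, add_zero] at this
    exact this.congr fun x => (ubar_eq up x).symm
  have p1 : 1 - up ≠ 0 := (sub_pos.2 h.one).ne'
  have p2 : 1 - (1 - up) ≠ 0 := by rw [sub_sub_cancel]; exact h.pos.ne'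
  rw [← phiOf_one_sub]
  exact (t.div (t.const_sub 1) p2).log (div_ne_zero p1 p2)

lemma phibar_mem (x : ℝ) : phibar up x ∈ Icc (-phiOf up) (phiOf up) := by
  have hm := ubar_mem h x
  constructor
  · rw [← sigmoid_le_iff, h.sig_neg_b, sigmoid_phibar h]; exact hm.1.le
  · rw [← sigmoid_le_iff, h.sig_b, sigmoid_phibar h]; exact hm.2.le

lemma hasDerivAt_tau_phibar (z x : ℝ) :
    HasDerivAt (tau z (phibar up)) (qf up (tau z (phibar up) x)) x :=
  (hasDerivAt_phibar h (x - z)).comp_sub_const x z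

lemma memC_tau_phibar (z : ℝ) : MemC (-phiOf up) (phiOf up) (tau z (phibar up)) := by
  have hd := hasDerivAt_tau_phibar h z
  have hdiff : Differentiable ℝ (tau z (phibar up)) := fun x => (hd x).differentiableAt
  have e : ∀ x, deriv (tau z (phibar up)) x = qf up (tau z (phibar up) x) := fun x => (hd x).deriv
  refine ⟨fun x y hxy => ⟨?_, ?_⟩, ?_, ?_⟩
  · refine monotone_of_deriv_nonneg hdiff (fun x => ?_) hxy
    rw [e]; exact h.qf_nonneg (phibar_mem h _)
  · have := convex_univ.image_sub_le_mul_sub_of_deriv_le (C := 1)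
      hdiff.continuous.continuousOn hdiff.differentiableOn
      (fun x _ => by rw [e]; exact (h.qf_lt_one _).le) x trivial y trivial hxy
    simpa using this
  · exact (tendsto_phibar_atBot h).comp (tendsto_atBot_add_const_right _ (-z) tendsto_id)
  · exact (tendsto_phibar_atTop h).comp (tendsto_atTop_add_const_right _ (-z) tendsto_id)

lemma memU_tau_ubar (z : ℝ) : MemU (tau z (ubarStanding up)) := by
  have hc : Continuous (ubarStanding up) :=
    continuous_iff_continuousAt.2 fun x => (hasDerivAt_ubar x).continuousAt
  refine ⟨(hc.comp (continuous_id.sub continuous_const)).measurable, fun x => ?_⟩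
  have hm := ubar_mem h (x - z)
  exact ⟨by linarith [hm.1, h.one, show tau z (ubarStanding up) x = ubarStanding up (x - z) from rfl],
    by linarith [hm.2, h.one, show tau z (ubarStanding up) x = ubarStanding up (x - z) from rfl]⟩

/-- Along the standing wave both relative entropies vanish pointwise. -/
lemma excess_tau (z : ℝ) : excess up (tau z (ubarStanding up)) (tau z (phibar up)) = 0 := by
  have e1 : ∀ x, kl (tau z (ubarStanding up) x) (sigmoid (tau z (phibar up) x)) = 0 := by
    intro x
    rw [show sigmoid (tau z (phibar up) x) = tau z (ubarStanding up) x from sigmoid_phibar h _,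
      kl_self]
  have e2 : ∀ x, kl (deriv (tau z (phibar up)) x) (qf up (tau z (phibar up) x)) = 0 := by
    intro x
    rw [(hasDerivAt_tau_phibar h z x).deriv, kl_self]
  simp [excess, e1, e2]

lemma GE_tau (z : ℝ) :
    GE (1 - up) up (tau z (ubarStanding up)) (tau z (phibar up)) = ((Kmin up : ℝ) : EReal) := by
  rw [GE_eq h (memU_tau_ubar h z) (memC_tau_phibar h z), excess_tau h]
  simp

/-! ### Uniqueness of minimizers up to translation -/

omit h in
lemma phibar_zero : phibar up 0 = 0 := by
  rw [phibar, ubar_eq, mul_zero, sigmoid_zero, show 1 - up + (2 * up - 1) * 2⁻¹ = 1 / 2 by ring]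
  norm_num [phiOf]

lemma eq_of_excess_eq_zero {u φ : ℝ → ℝ} (hu : MemU u) (hφ : MemC (-phiOf up) (phiOf up) φ)
    (he : excess up u φ = 0) :
    (∀ᵐ x, u x = sigmoid (φ x)) ∧ ∀ᵐ x, deriv φ x = qf up (φ x) := by
  have hφm := hφ.ml.continuous
  have m1 : Measurable fun x => kl (u x) (sigmoid (φ x)) :=
    measurable_kl hu.1 (continuous_sigmoid.comp hφm).measurable
  have m2 : Measurable fun x => kl (deriv φ x) (qf up (φ x)) :=
    measurable_kl (measurable_deriv φ) (Hup.continuous_qf.comp hφm).measurable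
  obtain ⟨z1, z2⟩ := add_eq_zero.1 (show _ + _ = (0 : ENNReal) from he)
  rw [lintegral_eq_zero_iff m1.ennreal_ofReal] at z1
  rw [lintegral_eq_zero_iff m2.ennreal_ofReal] at z2
  constructor
  · filter_upwards [z1] with x hx
    exact eq_of_kl_eq_zero (adm_left hu x)
      ((ENNReal.ofReal_eq_zero.1 hx).antisymm (kl_nonneg (adm_left hu x)))
  · filter_upwards [z2] with x hx
    exact eq_of_kl_eq_zero (adm_right h hφ x)
      ((ENNReal.ofReal_eq_zero.1 hx).antisymm (kl_nonneg (adm_right h hφ x)))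

/-- The slope equation `φ' = qf φ`, even if only a.e., determines `φ` up to translation. -/
lemma eq_tau_phibar {φ : ℝ → ℝ} (hφ : MemC (-phiOf up) (phiOf up) φ)
    (hae : ∀ᵐ x, deriv φ x = qf up (φ x)) : ∃ z, φ = tau z (phibar up) := by
  have hc : Continuous fun x => qf up (φ x) := Hup.continuous_qf.comp hφ.ml.continuous
  -- the integrated equation has a continuous integrand, so `φ` is a classical solution
  have hint : φ = fun x => φ 0 + ∫ t in (0:ℝ)..x, qf up (φ t) := by
    ext x
    rw [← intervalIntegral.integral_congr_ae (hae.mono fun t ht _ => ht),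
      hφ.ml.integral_deriv]
    ring
  have hd : ∀ x, HasDerivAt φ (qf up (φ x)) x := by
    intro x
    have := (intervalIntegral.integral_hasDerivAt_right (hc.intervalIntegrable 0 x)
      hc.stronglyMeasurable.stronglyMeasurableAtFilter hc.continuousAt).const_add (φ 0)
    rwa [← hint] at this
  obtain ⟨z, hz⟩ := hφ.exists_eq (neg_lt_zero.2 h.b_pos) h.b_pos
  obtain ⟨K, hK⟩ := Hup.exists_lipschitz_qf (up := up)
  refine ⟨z, ODE_solution_unique_univ (v := fun _ => qf up)
    (s := fun _ => Icc (-phiOf up) (phiOf up)) (K := K) (t₀ := z) (fun _ => hK)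
    (fun t => ⟨hd t, hφ.mem_Icc t⟩)
    (fun t => ⟨hasDerivAt_tau_phibar h z t, phibar_mem h _⟩) ?_⟩
  rw [hz, tau, sub_self, phibar_zero]

end

/-- For `u₋ + u₊ = 1` the functional `G` is lower semicontinuous on `X`, and
its set of minimizers is exactly `{(τ_z ū, τ_z φ̄) : z ∈ ℝ}` with
`ū(x) = 1/2 + (u₊-1/2) tanh((u₊-1/2)x)` and `φ̄ = s'(ū)`. -/
theorem stmt_12 (um up : ℝ) (h0 : 0 < um) (h1 : um < up) (h2 : up < 1)
    (hsum : um + up = 1) :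
    -- lower semicontinuity on X
    (∀ (u φ : ℝ → ℝ) (un φn : ℕ → ℝ → ℝ),
      MemX um up u φ → (∀ n, MemX um up (un n) (φn n)) → ConvX un φn u φ →
      GE um up u φ ≤ Filter.liminf (fun n => GE um up (un n) (φn n)) atTop) ∧
    -- every translate of (ū, φ̄) is a minimizer
    (∀ z : ℝ, ∀ u φ : ℝ → ℝ, MemX um up u φ →
      GE um up (tau z (ubarStanding up)) (tau z (fun x => phiOf (ubarStanding up x))) ≤
        GE um up u φ) ∧
    -- and every minimizer is such a translate
    (∀ u φ : ℝ → ℝ, MemX um up u φ →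
      GE um up u φ =
        GE um up (ubarStanding up) (fun x => phiOf (ubarStanding up x)) →
      ∃ z : ℝ, (∀ᵐ x ∂(volume : Measure ℝ), u x = ubarStanding up (x - z)) ∧
        ∀ x, φ x = phiOf (ubarStanding up (x - z))) := by
  obtain rfl : um = 1 - up := by linarith
  have h : Hup up := ⟨by linarith, h2⟩
  simp only [MemX, phiOf_one_sub]
  have hbar : GE (1 - up) up (ubarStanding up) (fun x => phiOf (ubarStanding up x)) =
      ((Kmin up : ℝ) : EReal) := by
    have e : ∀ f : ℝ → ℝ, tau 0 f = f := fun f => by ext x; rw [tau, sub_zero]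
    have := GE_tau h 0
    rwa [e, e] at this
  refine ⟨fun u φ un φn hX hn hc => GE_lsc h hX.1 hX.2 (fun n => (hn n).1) (fun n => (hn n).2) hc,
    fun z u φ hX => ?_, fun u φ hX hmin => ?_⟩
  · refine (GE_tau h z).le.trans ?_
    rw [GE_eq h hX.1 hX.2]
    exact le_add_of_nonneg_right (EReal.coe_ennreal_nonneg _)
  · rw [hbar, GE_eq h hX.1 hX.2] at hmin
    have he : excess up u φ = 0 := by
      by_cases ht : excess up u φ = ⊤
      · simp [ht] at hmin
      · rw [← EReal.coe_ennreal_toReal ht, ← EReal.coe_add, EReal.coe_eq_coe_iff] at hmin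
        have : (excess up u φ).toReal = 0 := by linarith
        exact ((ENNReal.toReal_eq_zero_iff _).1 this).resolve_right ht
    obtain ⟨e1, e2⟩ := eq_of_excess_eq_zero h hX.1 hX.2 he
    obtain ⟨z, rfl⟩ := eq_tau_phibar h hX.2 e2
    refine ⟨z, ?_, fun x => rfl⟩
    filter_upwards [e1] with x hx
    rw [hx]
    exact sigmoid_phibar h _

end
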